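/- Let E = (E;⊕,',0,1) be a lattice effect algebra. Let ℝ(E) = (E;·,',0,1) be the effect groupoid with x·y := ((x'∧y)⊕y')', and let 𝔼(ℝ(E)) = (E;⊕₁,',0,1) be the lattice effect algebra with x⊕₁y := (x'·y')' defined whenever x·y = 0. Then 𝔼(ℝ(E)) = E: for all a, b ∈ E, a⊕₁b exists if and only if a⊕b exists, and in that case a⊕₁b = a⊕b. -/

import Mathlib

/-- An effect algebra: a partial algebra (E;⊕,',0,1). The partial operation ⊕ is
modeled by a definedness predicate `D` together with a total function `add` whose
value is only meaningful on defined pairs. -/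
structure EffectAlgebra (E : Type*) where
  /-- definedness of `x ⊕ y` -/
  D : E → E → Prop
  /-- the value of `x ⊕ y` (meaningful only when `D x y`) -/
  add : E → E → E
  zero : E
  one : E
  /-- the complement `x'` -/
  compl : E → E
  /-- (E1) commutativity -/
  E1 : ∀ x y, D x y → D y x ∧ add x y = add y x
  /-- (E2) associativity -/
  E2 : ∀ x y z, D x y → D (add x y) z →
    D y z ∧ D x (add y z) ∧ add (add x y) z = add x (add y z)
  /-- (E3) existence of the complement -/
  E3a : ∀ x, D x (compl x)
  E3b : ∀ x, add x (compl x) = one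
  /-- (E3) uniqueness of the complement -/
  E3c : ∀ x y, D x y → add x y = one → y = compl x
  /-- (E4) -/
  E4 : ∀ x, D x one → x = zero

/-- The induced order of an effect algebra: `a ≤ b` iff `a ⊕ c = b` for some `c`. -/
def EffectAlgebra.le {E : Type*} (A : EffectAlgebra E) (a b : E) : Prop :=
  ∃ c, A.D a c ∧ A.add a c = b

/-- A lattice effect algebra: an effect algebra whose induced order is a lattice,
with meet `inf` and join `sup`. -/
structure LatticeEffectAlgebra (E : Type*) extends EffectAlgebra E where
  inf : E → E → E
  sup : E → E → E
  inf_le_left : ∀ a b, toEffectAlgebra.le (inf a b) a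
  inf_le_right : ∀ a b, toEffectAlgebra.le (inf a b) b
  le_inf : ∀ a b c, toEffectAlgebra.le c a → toEffectAlgebra.le c b →
    toEffectAlgebra.le c (inf a b)
  le_sup_left : ∀ a b, toEffectAlgebra.le a (sup a b)
  le_sup_right : ∀ a b, toEffectAlgebra.le b (sup a b)
  sup_le : ∀ a b c, toEffectAlgebra.le a c → toEffectAlgebra.le b c →
    toEffectAlgebra.le (sup a b) c

/-- The total operation `x·y := ((x'∧y)⊕y')'` on a lattice effect algebra
(well defined since `x'∧y ≤ y`). -/
def LatticeEffectAlgebra.prod {E : Type*} (A : LatticeEffectAlgebra E) (x y : E) : E :=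
  A.compl (A.add (A.inf (A.compl x) y) (A.compl y))


namespace EffectAlgebra

variable {E : Type*} (A : EffectAlgebra E)

theorem compl_compl (x : E) : A.compl (A.compl x) = x := by
  obtain ⟨h₁, h₂⟩ := A.E1 _ _ (A.E3a x)
  exact (A.E3c _ _ h₁ (h₂.symm.trans (A.E3b x))).symm

theorem compl_one : A.compl A.one = A.zero :=
  A.E4 _ (A.E1 _ _ (A.E3a A.one)).1

theorem compl_zero : A.compl A.zero = A.one := by
  rw [← A.compl_one, A.compl_compl]

theorem D_zero_and_add_zero (x : E) : A.D x A.zero ∧ A.add x A.zero = x := by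
  obtain ⟨h₁, h₂⟩ := A.E1 _ _ (A.E3a x)
  have hone : A.add (A.compl x) x = A.one := h₂.symm.trans (A.E3b x)
  have hD : A.D A.one A.zero := A.compl_one ▸ A.E3a A.one
  have hadd : A.add A.one A.zero = A.one := A.compl_one ▸ A.E3b A.one
  obtain ⟨h₃, h₄, h₅⟩ := A.E2 _ _ A.zero h₁ (hone ▸ hD)
  rw [hone, hadd] at h₅
  exact ⟨h₃, (A.E3c _ _ h₄ h₅.symm).trans (A.compl_compl x)⟩

/-- If `x ⊕ y` is defined, then `y ⊕ (x ⊕ y)' = x'`. -/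
theorem add_compl_add {x y : E} (h : A.D x y) :
    A.D y (A.compl (A.add x y)) ∧ A.add y (A.compl (A.add x y)) = A.compl x := by
  obtain ⟨h₁, h₂, h₃⟩ := A.E2 _ _ _ h (A.E3a (A.add x y))
  exact ⟨h₁, A.E3c _ _ h₂ (h₃.symm.trans (A.E3b _))⟩

theorem add_left_cancel {a b c : E} (hb : A.D a b) (hc : A.D a c)
    (h : A.add a b = A.add a c) : b = c := by
  obtain ⟨hb', eb⟩ := A.E1 _ _ hb
  obtain ⟨hc', ec⟩ := A.E1 _ _ hc
  have hcompl : A.compl b = A.compl c := by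
    rw [← (A.add_compl_add hb').2, ← (A.add_compl_add hc').2, ← eb, ← ec, h]
  rw [← A.compl_compl b, hcompl, A.compl_compl]

theorem eq_zero_of_add_eq_zero {c d : E} (h : A.D c d) (h0 : A.add c d = A.zero) :
    c = A.zero := by
  have hD : A.D (A.add c d) A.one := by
    rw [h0, ← A.compl_zero]
    exact A.E3a _
  have hd : d = A.zero := A.E4 _ (A.E2 _ _ _ h hD).1
  exact (A.D_zero_and_add_zero c).2.symm.trans (hd ▸ h0)

theorem le_refl (a : E) : A.le a a :=
  ⟨A.zero, A.D_zero_and_add_zero a⟩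

theorem le_antisymm {a b : E} (hab : A.le a b) (hba : A.le b a) : a = b := by
  obtain ⟨c, hc, rfl⟩ := hab
  obtain ⟨d, hd, hda⟩ := hba
  obtain ⟨h₁, h₂, h₃⟩ := A.E2 _ _ _ hc hd
  obtain ⟨h₄, h₅⟩ := A.D_zero_and_add_zero a
  have hcd : A.add c d = A.zero :=
    A.add_left_cancel h₂ h₄ (h₃.symm.trans (hda.trans h₅.symm))
  rw [A.eq_zero_of_add_eq_zero h₁ hcd, h₅]

theorem D_iff_le_compl {a b : E} : A.D a b ↔ A.le a (A.compl b) := by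
  constructor
  · intro h
    exact ⟨_, A.add_compl_add (A.E1 _ _ h).1⟩
  · rintro ⟨c, hc, h⟩
    obtain ⟨hc', ec⟩ := A.E1 _ _ hc
    have hD : A.D (A.add c a) b := by
      rw [← ec, h]
      exact (A.E1 _ _ (A.E3a b)).1
    exact (A.E2 _ _ _ hc' hD).1

end EffectAlgebra

namespace LatticeEffectAlgebra

variable {E : Type*} (A : LatticeEffectAlgebra E)

theorem inf_eq_left {a b : E} (h : A.le a b) : A.inf a b = a :=
  A.le_antisymm (A.inf_le_left a b) (A.le_inf a b a (A.le_refl a) h)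

theorem inf_eq_right {a b : E} (h : A.le b a) : A.inf a b = b :=
  A.le_antisymm (A.inf_le_right a b) (A.le_inf a b b h (A.le_refl b))

theorem prod_eq_zero_iff {a b : E} : A.prod a b = A.zero ↔ A.D a b := by
  constructor
  · intro h
    have hone : A.add (A.inf (A.compl a) b) (A.compl b) = A.one := by
      rw [← A.compl_zero, ← h, prod, A.compl_compl]
    have hD : A.D (A.inf (A.compl a) b) (A.compl b) := by
      rw [A.D_iff_le_compl, A.compl_compl]
      exact A.inf_le_right _ _
    obtain ⟨hD', e⟩ := A.E1 _ _ hD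
    have hinf : A.inf (A.compl a) b = b :=
      (A.E3c _ _ hD' (e.symm.trans hone)).trans (A.compl_compl b)
    have hle : A.le b (A.compl a) := by
      have := A.inf_le_left (A.compl a) b
      rwa [hinf] at this
    exact (A.E1 _ _ (A.D_iff_le_compl.2 hle)).1
  · intro h
    rw [prod, A.inf_eq_right (A.D_iff_le_compl.1 (A.E1 _ _ h).1), A.E3b, A.compl_one]

theorem compl_prod_compl_compl {a b : E} (h : A.D a b) :
    A.compl (A.prod (A.compl a) (A.compl b)) = A.add a b := by
  rw [prod, A.compl_compl, A.compl_compl, A.compl_compl,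
    A.inf_eq_left (A.D_iff_le_compl.1 h)]

end LatticeEffectAlgebra

/-- `𝔼(ℝ(E)) = E`: for a lattice effect algebra `E` with `x·y := ((x'∧y)⊕y')'` and
`x⊕₁y := (x'·y')'` defined whenever `x·y = 0`, for all `a, b` the sum `a⊕₁b` exists
iff `a⊕b` exists, and in that case `a⊕₁b = a⊕b`. -/
theorem round_trip_effect_algebra {E : Type*} (A : LatticeEffectAlgebra E) (a b : E) :
    (A.prod a b = A.zero ↔ A.D a b) ∧
    (A.D a b → A.compl (A.prod (A.compl a) (A.compl b)) = A.add a b) :=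
  ⟨A.prod_eq_zero_iff, A.compl_prod_compl_compl⟩
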